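/- For all integers t,r ≥ 1 and every real ε with 0 < ε < 1/(r+2), there exists an edge-weighted graph of treewidth at most 2t+2 whose shortest-path metric has ε-scatter dimension at least 2^C(t+r,t), where C(·,·) denotes the binomial coefficient. -/

import Mathlib

open scoped ENNReal

namespace ScatterDim

variable {V : Type}

/-- Total weight of a walk in an edge-weighted graph. -/
noncomputable def walkWeight {G : SimpleGraph V} (w : Sym2 V → ℝ≥0∞)
    {u v : V} (p : G.Walk u v) : ℝ≥0∞ :=
  (p.edges.map w).sum

/-- Shortest-path metric of an edge-weighted graph: the infimum of the total
weights of walks between the two vertices. -/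
noncomputable def gdist (G : SimpleGraph V) (w : Sym2 V → ℝ≥0∞) (u v : V) : ℝ≥0∞ :=
  ⨅ p : G.Walk u v, walkWeight w p

/-- Shortest-path distance measured within the subgraph induced on `S`
(`⊤` if one of the endpoints is not in `S`). -/
noncomputable def distOn (G : SimpleGraph V) (w : Sym2 V → ℝ≥0∞) (S : Set V)
    (u v : V) : ℝ≥0∞ :=
  ⨅ (hu : u ∈ S), ⨅ (hv : v ∈ S), ⨅ (p : (G.induce S).Walk ⟨u, hu⟩ ⟨v, hv⟩),
    (p.edges.map (fun e => w (e.map Subtype.val))).sum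

/-- Distance between two sets of vertices inside the subgraph induced on `S`. -/
noncomputable def setDistOn (G : SimpleGraph V) (w : Sym2 V → ℝ≥0∞) (S : Set V)
    (A B : Set V) : ℝ≥0∞ :=
  ⨅ a ∈ A, ⨅ b ∈ B, distOn G w S a b

/-- Distance from a point to a set. -/
noncomputable def pdist (G : SimpleGraph V) (w : Sym2 V → ℝ≥0∞) (u : V) (X : Set V) : ℝ≥0∞ :=
  ⨅ x ∈ X, gdist G w u x

/-- `Y` is weakly `r`-reachable from `X` (with respect to the partition `P`
ordered by `le`): there is a path of total weight at most `r` from a vertex of `X`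
to a vertex of `Y` in the subgraph induced on the union of the parts `Z` with `Y ⪯ Z`. -/
def WReach (G : SimpleGraph V) (w : Sym2 V → ℝ≥0∞) (P : Set (Set V))
    (le : Set V → Set V → Prop) (r : ℝ) (X Y : Set V) : Prop :=
  setDistOn G w (⋃₀ {Z | Z ∈ P ∧ le Y Z}) X Y ≤ ENNReal.ofReal r

/-- The weak coloring number of `G` with respect to the partition `P`
and the order `le`: the maximum over `X ∈ P` of the number of parts weakly
`r`-reachable from `X`. -/
noncomputable def wcol (G : SimpleGraph V) (w : Sym2 V → ℝ≥0∞) (P : Set (Set V))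
    (le : Set V → Set V → Prop) (r : ℝ) : ℕ :=
  ⨆ X ∈ P, {Y | Y ∈ P ∧ WReach G w P le r X Y}.ncard

/-- `le` is a total (linear) order on the collection `P`. -/
def IsLinearOrderOn {α : Type} (P : Set α) (le : α → α → Prop) : Prop :=
  (∀ X ∈ P, le X X) ∧
  (∀ X ∈ P, ∀ Y ∈ P, le X Y → le Y X → X = Y) ∧
  (∀ X ∈ P, ∀ Y ∈ P, ∀ Z ∈ P, le X Y → le Y Z → le X Z) ∧
  (∀ X ∈ P, ∀ Y ∈ P, le X Y ∨ le Y X)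

/-- An `ε`-ladder of width `r` and length `ℓ` in the metric `dist`. -/
def IsLadder (dist : V → V → ℝ≥0∞) (ε r : ℝ) (ℓ : ℕ) (x p : Fin ℓ → V) : Prop :=
  (∀ i j : Fin ℓ, j < i → dist (p j) (x i) ≤ ENNReal.ofReal r) ∧
  (∀ i : Fin ℓ, ENNReal.ofReal ((1 + ε) * r) < dist (p i) (x i))

/-- `G` contains the complete graph on `h` vertices as a minor, witnessed by
pairwise disjoint connected nonempty branch sets that are pairwise adjacent. -/
def HasCompleteMinor (G : SimpleGraph V) (h : ℕ) : Prop :=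
  ∃ B : Fin h → Set V,
    (∀ i, (G.induce (B i)).Connected) ∧
    (∀ i j, i ≠ j → Disjoint (B i) (B j)) ∧
    (∀ i j, i ≠ j → ∃ u ∈ B i, ∃ v ∈ B j, G.Adj u v)

/-- `(T, bag)` is a tree decomposition of `G`. -/
def IsTreeDecompOf {ι : Type} (G : SimpleGraph V) (T : SimpleGraph ι) (bag : ι → Set V) : Prop :=
  T.IsTree ∧
  (∀ u v : V, G.Adj u v → ∃ t, u ∈ bag t ∧ v ∈ bag t) ∧
  (∀ v : V, (T.induce {t | v ∈ bag t}).Connected)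

/-- `G` has treewidth at most `n`. -/
def TreewidthAtMost (G : SimpleGraph V) (n : ℕ) : Prop :=
  ∃ (ι : Type) (T : SimpleGraph ι) (bag : ι → Set V),
    IsTreeDecompOf G T bag ∧ ∀ t, (bag t).ncard ≤ n + 1

/-- `D` is an `r`-cover of the edge-weighted graph `(G, w)`. -/
def IsCover (G : SimpleGraph V) (w : Sym2 V → ℝ≥0∞) (r : ℝ) (D : Set (Set V)) : Prop :=
  ∀ v : V, ∃ A ∈ D, ∀ u : V, gdist G w v u ≤ ENNReal.ofReal r → u ∈ A

/-!
Label the levels `0, …, M` of a binary tree by `φ`, with the label `r` on the last level only. Take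
two copies of the tree. An edge of weight `1` joins a node to a descendant in the same copy when its
label is larger by one and no label strictly between them exceeds that of the upper node (which is
then *visible*). A left child in the first copy is joined to its right sibling in the second copy by
an edge of weight `2 φ + 4`.

The ladder consists of the two copies of each leaf. For `j < i`, the leaf `j` in the first copy
climbs to the level where the paths to `j` and `i` branch, crosses there and descends to `i` in the
second copy, at total cost `(r - φ) + (2 φ + 4) + (r - φ) = 2 r + 4`. The ancestors of a single leaf
never contain both ends of a crossing edge. Tilting a natural potential by `± 1` according to
whether a vertex is such an ancestor therefore keeps it `1`-Lipschitz, and it separates the two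
copies of a leaf by `2 r + 6 > (1 + ε) (2 r + 4)`.

A bag of the tree decomposition holds three vertices near a node and both copies of its visible
ancestors, so if at most `t` levels are visible from each level then the width is at most `2 t + 2`.
Such labellings with `(t + r).choose t` levels arise from Pascal's rule, by gluing one for
`(t + 1, r)` on top of one for `(t, r + 1)`: the last level of the upper one has the largest label
there, hides everything above it, and costs one visible level below.
-/

/-! ### Shortest-path distances -/

section Distance

variable {G : SimpleGraph V} {w : Sym2 V → ℝ≥0∞}

theorem walkWeight_cons {a b c : V} (h : G.Adj a b) (p : G.Walk b c) :
    walkWeight w (p.cons h) = w s(a, b) + walkWeight w p := by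
  simp [walkWeight]

theorem walkWeight_append {a b c : V} (p : G.Walk a b) (q : G.Walk b c) :
    walkWeight w (p.append q) = walkWeight w p + walkWeight w q := by
  simp [walkWeight, SimpleGraph.Walk.edges_append]

theorem walkWeight_reverse {a b : V} (p : G.Walk a b) :
    walkWeight w p.reverse = walkWeight w p := by
  simp [walkWeight, SimpleGraph.Walk.edges_reverse, List.sum_reverse]

theorem gdist_le_walkWeight {a b : V} (p : G.Walk a b) : gdist G w a b ≤ walkWeight w p :=
  iInf_le _ p

theorem gdist_self (a : V) : gdist G w a a = 0 :=
  le_antisymm ((gdist_le_walkWeight .nil).trans (by simp [walkWeight])) zero_le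

theorem gdist_le_of_adj {a b : V} (h : G.Adj a b) : gdist G w a b ≤ w s(a, b) :=
  (gdist_le_walkWeight (.cons h .nil)).trans (by simp [walkWeight])

theorem gdist_triangle (a b c : V) : gdist G w a c ≤ gdist G w a b + gdist G w b c :=
  ENNReal.le_iInf_add_iInf fun p q =>
    (gdist_le_walkWeight (p.append q)).trans (walkWeight_append p q).le

theorem gdist_comm (a b : V) : gdist G w a b = gdist G w b a := by
  have le_swap (a b : V) : gdist G w a b ≤ gdist G w b a :=
    le_iInf fun p => (gdist_le_walkWeight p.reverse).trans (walkWeight_reverse p).le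
  exact (le_swap a b).antisymm (le_swap b a)

theorem edist_le_gdist {α : Type*} [PseudoEMetricSpace α] {f : V → α}
    (hf : ∀ a b, G.Adj a b → edist (f a) (f b) ≤ w s(a, b)) (a b : V) :
    edist (f a) (f b) ≤ gdist G w a b := by
  refine le_iInf fun p => ?_
  induction p with
  | nil => simp
  | @cons a b c hab p ih =>
    calc edist (f a) (f c) ≤ edist (f a) (f b) + edist (f b) (f c) := edist_triangle _ _ _
      _ ≤ w s(a, b) + walkWeight w p := add_le_add (hf a b hab) ih
      _ = walkWeight w (p.cons hab) := (walkWeight_cons hab p).symm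

end Distance

/-! ### Tree decompositions over rooted trees -/

section ParentGraph

variable {ι α : Type*} [Preorder α] {parent : ι → ι} {rank : ι → α}

/-- The graph joining every node of a rooted forest to its parent. Roots are the fixed points of
`parent`. -/
def parentGraph (parent : ι → ι) : SimpleGraph ι :=
  SimpleGraph.fromRel fun x y => parent x = y

theorem induce_parentGraph_connected [WellFoundedLT α] {S : Set ι} {top : ι} (htop : top ∈ S)
    (hS : ∀ x ∈ S, x ≠ top → parent x ∈ S ∧ rank (parent x) < rank x) :
    ((parentGraph parent).induce S).Connected := by
  have reachable_top (x : S) : ((parentGraph parent).induce S).Reachable x ⟨top, htop⟩ := by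
    induction x using (InvImage.wf (fun x : S => rank x.1) wellFounded_lt).induction with
    | _ x ih =>
      by_cases hx : x = ⟨top, htop⟩
      · rw [hx]
      obtain ⟨hmem, hlt⟩ := hS x.1 x.2 fun h => hx (Subtype.ext h)
      have hadj : ((parentGraph parent).induce S).Adj x ⟨parent x.1, hmem⟩ :=
        ⟨fun h => hlt.ne (congrArg rank h).symm, Or.inl rfl⟩
      exact hadj.reachable.trans (ih ⟨parent x.1, hmem⟩ hlt)
  have : Nonempty S := ⟨⟨top, htop⟩⟩
  exact ⟨fun x y => (reachable_top x).trans (reachable_top y).symm⟩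

theorem rank_iterate_parent_le (h : ∀ x, parent x ≠ x → rank (parent x) < rank x) (n : ℕ) (x : ι) :
    rank (parent^[n] x) ≤ rank x := by
  induction n generalizing x with
  | zero => exact le_rfl
  | succ n ih =>
    rw [Function.iterate_succ_apply]
    refine (ih (parent x)).trans ?_
    by_cases hx : parent x = x
    · rw [hx]
    · exact (h x hx).le

theorem exists_iterate_parent_eq_of_adj {x a b : ι}
    (hab : (parentGraph parent \ SimpleGraph.fromEdgeSet {s(x, parent x)}).Adj a b)
    (ha : ∃ n, parent^[n] a = x) : ∃ n, parent^[n] b = x := by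
  obtain ⟨n, hn⟩ := ha
  obtain ⟨⟨hne, rfl | rfl⟩, hdeleted⟩ := hab
  · cases n with
    | zero =>
      obtain rfl : a = x := hn
      exact absurd ((SimpleGraph.fromEdgeSet_adj _).2 ⟨rfl, hne⟩) hdeleted
    | succ n => exact ⟨n, hn⟩
  · exact ⟨n + 1, hn⟩

-- Deleting the edge above `x` leaves no edge from the descendants of `x` to other nodes.
theorem parentGraph_isBridge (h : ∀ x, parent x ≠ x → rank (parent x) < rank x) {x : ι}
    (hx : parent x ≠ x) : (parentGraph parent).IsBridge s(x, parent x) := by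
  rw [SimpleGraph.isBridge_iff]
  rintro ⟨p⟩
  have descendant {a b : ι}
      (p : (parentGraph parent \ SimpleGraph.fromEdgeSet {s(x, parent x)}).Walk a b)
      (ha : ∃ n, parent^[n] a = x) : ∃ n, parent^[n] b = x := by
    induction p with
    | nil => exact ha
    | cons hab _ ih => exact ih (exists_iterate_parent_eq_of_adj hab ha)
  obtain ⟨n, hn⟩ := descendant p ⟨0, rfl⟩
  have hle := rank_iterate_parent_le h n (parent x)
  rw [hn] at hle
  exact (h x hx).not_ge hle

theorem parentGraph_isAcyclic (h : ∀ x, parent x ≠ x → rank (parent x) < rank x) :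
    (parentGraph parent).IsAcyclic := by
  rw [SimpleGraph.isAcyclic_iff_forall_adj_isBridge]
  rintro x y ⟨hne, rfl | rfl⟩
  · exact parentGraph_isBridge h hne.symm
  · rw [Sym2.eq_swap]
    exact parentGraph_isBridge h hne

theorem parentGraph_isTree [WellFoundedLT α] {root : ι} (hroot : parent root = root)
    (h : ∀ x, x ≠ root → rank (parent x) < rank x) : (parentGraph parent).IsTree := by
  refine ⟨?_, parentGraph_isAcyclic fun x hx => h x ?_⟩
  · exact (SimpleGraph.induceUnivIso _).connected_iff.1 <|
      induce_parentGraph_connected (Set.mem_univ root) fun x _ hx => ⟨Set.mem_univ _, h x hx⟩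
  · rintro rfl
    exact hx hroot

end ParentGraph

/-! ### Level labellings -/

section Labelling

variable {φ φ₁ φ₂ : ℕ → ℕ} {k m n t r M M₁ M₂ : ℕ}

/-- Level `k` is visible from the later level `n` when no label strictly between them exceeds the
label of `k`. -/
def Visible (φ : ℕ → ℕ) (k n : ℕ) : Prop :=
  k < n ∧ ∀ j, k < j → j < n → φ j ≤ φ k

theorem Visible.of_le (h : Visible φ k n) (hkm : k < m) (hmn : m ≤ n) : Visible φ k m :=
  ⟨hkm, fun j hkj hjm => h.2 j hkj (hjm.trans_le hmn)⟩

theorem finite_setOf_visible (φ : ℕ → ℕ) (n : ℕ) : {k | Visible φ k n}.Finite :=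
  (Set.finite_Iio n).subset fun _ h => h.1

/-- A labelling of the levels `0, …, M` in which at most `t` levels are visible from each level,
while every level before the last is visible from some level whose label is larger by one. The last
label is `r`, and it is attained nowhere else. -/
structure IsLevelLabelling (φ : ℕ → ℕ) (M t r : ℕ) : Prop where
  exists_next : ∀ k < M, ∃ m ≤ M, Visible φ k m ∧ φ m = φ k + 1
  ncard_visible_le : ∀ n ≤ M, {k | Visible φ k n}.ncard ≤ t
  last_eq : φ M = r
  lt_of_lt : ∀ k < M, φ k < r

theorem isLevelLabelling_const (t r : ℕ) : IsLevelLabelling (fun _ => r) 0 t r where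
  exists_next k hk := absurd hk k.not_lt_zero
  ncard_visible_le n hn := by simp [Visible, Nat.le_zero.1 hn]
  last_eq := rfl
  lt_of_lt k hk := absurd hk k.not_lt_zero

/-- The labelling that uses `φ₁` on the levels `0, …, M` and continues with `φ₂`. -/
def glue (φ₁ φ₂ : ℕ → ℕ) (M k : ℕ) : ℕ :=
  if k ≤ M then φ₁ k else φ₂ (k - (M + 1))

theorem glue_of_le (h : k ≤ M) : glue φ₁ φ₂ M k = φ₁ k :=
  if_pos h

theorem glue_add (φ₁ φ₂ : ℕ → ℕ) (M k : ℕ) : glue φ₁ φ₂ M (k + (M + 1)) = φ₂ k := by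
  rw [glue, if_neg (by lia), Nat.add_sub_cancel]

theorem visible_glue_iff_of_le (hn : n ≤ M) :
    Visible (glue φ₁ φ₂ M) k n ↔ Visible φ₁ k n :=
  and_congr_right fun _ => forall₃_congr fun j _ _ => by
    rw [glue_of_le (k := j) (by lia), glue_of_le (k := k) (by lia)]

theorem visible_glue_add_iff :
    Visible (glue φ₁ φ₂ M) (k + (M + 1)) (n + (M + 1)) ↔ Visible φ₂ k n := by
  refine and_congr (Nat.add_lt_add_iff_right) ⟨fun h j hkj hjn => ?_, fun h j hkj hjn => ?_⟩
  · simpa only [glue_add] using h (j + (M + 1)) (by lia) (by lia)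
  · obtain ⟨j, rfl⟩ : ∃ i, j = i + (M + 1) := ⟨j - (M + 1), by lia⟩
    simpa only [glue_add] using h j (by lia) (by lia)

theorem setOf_visible_glue_add_subset (hφ₁ : ∀ k < M, φ₁ k < φ₁ M) (n : ℕ) :
    {k | Visible (glue φ₁ φ₂ M) k (n + (M + 1))} ⊆
      insert M ((· + (M + 1)) '' {k | Visible φ₂ k n}) := by
  intro k hk
  rcases lt_trichotomy k M with hkM | rfl | hMk
  · have hle := hk.2 M hkM (by lia)
    rw [glue_of_le le_rfl, glue_of_le hkM.le] at hle
    exact absurd hle (hφ₁ k hkM).not_ge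
  · exact Set.mem_insert _ _
  · obtain ⟨i, rfl⟩ : ∃ i, k = i + (M + 1) := ⟨k - (M + 1), by lia⟩
    exact Set.mem_insert_of_mem _ ⟨i, visible_glue_add_iff.1 hk, rfl⟩

theorem ncard_visible_glue_add_le (hφ₁ : ∀ k < M, φ₁ k < φ₁ M) (n : ℕ) :
    {k | Visible (glue φ₁ φ₂ M) k (n + (M + 1))}.ncard ≤ {k | Visible φ₂ k n}.ncard + 1 :=
  calc
    _ ≤ (insert M ((· + (M + 1)) '' {k | Visible φ₂ k n})).ncard :=
      Set.ncard_le_ncard (setOf_visible_glue_add_subset hφ₁ n)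
        (((finite_setOf_visible φ₂ n).image _).insert M)
    _ ≤ ((· + (M + 1)) '' {k | Visible φ₂ k n}).ncard + 1 := Set.ncard_insert_le _ _
    _ = {k | Visible φ₂ k n}.ncard + 1 := by
      rw [Set.ncard_image_of_injective _ (add_left_injective (M + 1))]

theorem exists_next_glue (h₁ : IsLevelLabelling φ₁ M₁ (t + 1) r)
    (h₂ : IsLevelLabelling φ₂ M₂ t (r + 1)) (hk : k < M₂ + (M₁ + 1)) :
    ∃ m ≤ M₂ + (M₁ + 1), Visible (glue φ₁ φ₂ M₁) k m ∧
      glue φ₁ φ₂ M₁ m = glue φ₁ φ₂ M₁ k + 1 := by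
  rcases lt_trichotomy k M₁ with hkM | rfl | hMk
  · obtain ⟨m, hm, hvis, hsucc⟩ := h₁.exists_next k hkM
    refine ⟨m, by lia, (visible_glue_iff_of_le hm).2 hvis, ?_⟩
    rw [glue_of_le hm, glue_of_le hkM.le, hsucc]
  · refine ⟨M₂ + (k + 1), le_rfl, ⟨hk, fun j hkj hj => ?_⟩, ?_⟩
    · obtain ⟨i, rfl⟩ : ∃ i, j = i + (k + 1) := ⟨j - (k + 1), by lia⟩
      rw [glue_add, glue_of_le le_rfl, h₁.last_eq]
      exact Nat.lt_succ_iff.1 (h₂.lt_of_lt i (by lia))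
    · rw [glue_add, glue_of_le le_rfl, h₁.last_eq, h₂.last_eq]
  · obtain ⟨i, rfl⟩ : ∃ i, k = i + (M₁ + 1) := ⟨k - (M₁ + 1), by lia⟩
    obtain ⟨m, hm, hvis, hsucc⟩ := h₂.exists_next i (by lia)
    refine ⟨m + (M₁ + 1), by lia, visible_glue_add_iff.2 hvis, ?_⟩
    rw [glue_add, glue_add, hsucc]

theorem IsLevelLabelling.glue (h₁ : IsLevelLabelling φ₁ M₁ (t + 1) r)
    (h₂ : IsLevelLabelling φ₂ M₂ t (r + 1)) :
    IsLevelLabelling (glue φ₁ φ₂ M₁) (M₂ + (M₁ + 1)) (t + 1) (r + 1) where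
  exists_next _ hk := exists_next_glue h₁ h₂ hk
  ncard_visible_le n hn := by
    rcases le_or_gt n M₁ with hnM | hMn
    · simp only [visible_glue_iff_of_le hnM]
      exact h₁.ncard_visible_le n hnM
    · obtain ⟨i, rfl⟩ : ∃ i, n = i + (M₁ + 1) := ⟨n - (M₁ + 1), by lia⟩
      exact (ncard_visible_glue_add_le (h₁.last_eq ▸ h₁.lt_of_lt) i).trans
        (Nat.succ_le_succ (h₂.ncard_visible_le i (by lia)))
  last_eq := by rw [glue_add, h₂.last_eq]
  lt_of_lt k hk := by
    rcases lt_trichotomy k M₁ with hkM | rfl | hMk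
    · rw [glue_of_le hkM.le]
      exact (h₁.lt_of_lt k hkM).trans r.lt_succ_self
    · rw [glue_of_le le_rfl, h₁.last_eq]
      exact r.lt_succ_self
    · obtain ⟨i, rfl⟩ : ∃ i, k = i + (M₁ + 1) := ⟨k - (M₁ + 1), by lia⟩
      rw [glue_add]
      exact h₂.lt_of_lt i (by lia)

theorem exists_isLevelLabelling (t r : ℕ) :
    ∃ M φ, M + 1 = (t + r).choose t ∧ IsLevelLabelling φ M t r := by
  induction t generalizing r with
  | zero => exact ⟨0, _, by simp, isLevelLabelling_const 0 r⟩
  | succ t iht =>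
    induction r with
    | zero => exact ⟨0, _, by simp, isLevelLabelling_const (t + 1) 0⟩
    | succ r ihr =>
      obtain ⟨M₁, φ₁, hM₁, h₁⟩ := ihr
      obtain ⟨M₂, φ₂, hM₂, h₂⟩ := iht (r + 1)
      refine ⟨M₂ + (M₁ + 1), _, ?_, h₁.glue h₂⟩
      have pascal : (t + 1 + (r + 1)).choose (t + 1) =
          (t + (r + 1)).choose t + (t + 1 + r).choose (t + 1) := by
        rw [← add_assoc, Nat.choose_succ_succ, add_right_comm t 1 r, add_assoc]
      rw [pascal, ← hM₁, ← hM₂]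
      ring

end Labelling

/-! ### The graph -/

/-- A nonempty binary word of length at most `M + 1`, that is, a node of the binary tree with levels
`0, …, M` below an omitted root. The most recent letter `bit` comes first, so that the ancestors of
a word are its suffixes. -/
@[ext]
structure Word (M : ℕ) where
  stem : List Bool
  bit : Bool
  length_stem_le : stem.length ≤ M

/-- A vertex of the graph: a node of the binary tree, taken in one of two copies (`side`) of it. -/
structure Vertex (M : ℕ) extends Word M where
  side : Bool

theorem Vertex.ext_toWord {M : ℕ} {u v : Vertex M} (hword : u.toWord = v.toWord)
    (hside : u.side = v.side) : u = v := by
  cases u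
  cases v
  exact congr (congrArg Vertex.mk hword) hside

instance (M : ℕ) : Finite (Word M) :=
  have : Finite {l : List Bool // l.length ≤ M} := List.finite_length_le Bool M
  Finite.of_injective
    (fun x => ((⟨x.stem, x.length_stem_le⟩ : {l : List Bool // l.length ≤ M}), x.bit))
    fun _ _ h => Word.ext (congrArg (fun a => a.1.1) h) (congrArg Prod.snd h)

instance (M : ℕ) : Finite (Vertex M) :=
  Finite.of_injective (fun v => (v.toWord, v.side)) fun _ _ h =>
    Vertex.ext_toWord (congrArg Prod.fst h) (congrArg Prod.snd h)

namespace Word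

variable {M m : ℕ} {W : List Bool}

/-- The depth of a word in the binary tree, counted from `0`. -/
def level (x : Word M) : ℕ := x.stem.length

/-- The letters of a word, most recent first. -/
def toList (x : Word M) : List Bool := x.bit :: x.stem

theorem length_toList (x : Word M) : x.toList.length = x.level + 1 := rfl

theorem stem_suffix_toList (x : Word M) : x.stem <:+ x.toList :=
  List.suffix_cons _ _

theorem toList_injective : Function.Injective (toList (M := M)) := fun _ _ h =>
  Word.ext (List.cons.inj h).2 (List.cons.inj h).1

theorem eq_of_suffix {x y : Word M} (hx : x.toList <:+ W) (hy : y.toList <:+ W)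
    (h : x.level = y.level) : x = y := by
  have hlength : x.toList.length = y.toList.length := congrArg (· + 1) h
  exact toList_injective
    ((List.suffix_of_suffix_length_le hx hy hlength.le).eq_of_length hlength)

theorem exists_suffix_level_eq (x : Word M) (hm : m ≤ x.level) :
    ∃ y : Word M, y.toList <:+ x.toList ∧ y.level = m := by
  have hsuffix := List.drop_suffix (x.level - m) x.toList
  have hlength : (x.toList.drop (x.level - m)).length = m + 1 := by
    rw [List.length_drop, length_toList]
    lia
  cases hdrop : x.toList.drop (x.level - m) with
  | nil => simp [hdrop] at hlength
  | cons b s =>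
    rw [hdrop] at hsuffix hlength
    have hs : s.length = m := Nat.succ.inj hlength
    exact ⟨⟨s, b, hs.trans_le (hm.trans x.length_stem_le)⟩, hsuffix, hs⟩

end Word

section Graph

variable {φ : ℕ → ℕ} {M : ℕ} {u v : Vertex M}

/-- The edges inside one copy of the tree: `v` is a descendant of `u` with the next label, and the
level of `u` is visible from that of `v`. -/
def Climbs (φ : ℕ → ℕ) (u v : Vertex M) : Prop :=
  u.side = v.side ∧ u.toList <:+ v.stem ∧ Visible φ u.level v.level ∧ φ v.level = φ u.level + 1

/-- The edges between the two copies: a left child in the first copy is joined to its right sibling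
in the second copy. -/
def Crosses (u v : Vertex M) : Prop :=
  u.stem = v.stem ∧ u.bit = false ∧ u.side = false ∧ v.bit = true ∧ v.side = true

/-- The graph that carries the ladder. -/
def ladderGraph (φ : ℕ → ℕ) (M : ℕ) : SimpleGraph (Vertex M) :=
  SimpleGraph.fromRel fun u v => Climbs φ u v ∨ Crosses u v

/-- A real number, reflected in `0` on the side `false`. This places the two copies of the tree on
opposite sides of `0`. -/
def signed (side : Bool) (x : ℝ) : ℝ := cond side x (-x)

/-- The position of a vertex on the real line, at distance `2` beyond its label. -/
def potential (φ : ℕ → ℕ) (u : Vertex M) : ℝ := signed u.side (φ u.level + 2)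

/-- The edge weights: every edge is as long as the distance between the positions of its ends. -/
noncomputable def ladderWeight (φ : ℕ → ℕ) : Sym2 (Vertex M) → ℝ≥0∞ :=
  Sym2.lift ⟨fun u v => edist (potential φ u) (potential φ v), fun _ _ => edist_comm _ _⟩

theorem ladderWeight_ne_top (φ : ℕ → ℕ) (e : Sym2 (Vertex M)) : ladderWeight φ e ≠ ⊤ := by
  induction e using Sym2.ind with
  | _ u v => exact edist_ne_top (potential φ u) (potential φ v)

theorem Climbs.adj (h : Climbs φ u v) : (ladderGraph φ M).Adj u v :=
  ⟨fun huv => h.2.2.1.1.ne (congrArg (fun a => a.level) huv), Or.inl (Or.inl h)⟩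

theorem Crosses.adj (h : Crosses u v) : (ladderGraph φ M).Adj u v := by
  refine ⟨?_, Or.inl (Or.inr h)⟩
  rintro rfl
  exact Bool.false_ne_true (h.2.1.symm.trans h.2.2.2.1)

theorem Crosses.level_eq (h : Crosses u v) : u.level = v.level :=
  congrArg List.length h.1

theorem edist_signed (side : Bool) (x y : ℝ) :
    edist (signed side x) (signed side y) = edist x y := by
  cases side
  · exact edist_neg_neg x y
  · rfl

theorem edist_signed_false_true {x y : ℝ} (h : 0 ≤ x + y) :
    edist (signed false x) (signed true y) = ENNReal.ofReal (x + y) := by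
  rw [edist_dist, dist_comm, Real.dist_eq]
  change ENNReal.ofReal |y - -x| = _
  rw [sub_neg_eq_add, add_comm y x, abs_of_nonneg h]

theorem Climbs.ladderWeight_eq (h : Climbs φ u v) : ladderWeight φ s(u, v) = 1 := by
  obtain ⟨hside, -, -, hlabel⟩ := h
  change edist (potential φ u) (potential φ v) = 1
  rw [potential, potential, hside, edist_signed, hlabel, edist_dist, Real.dist_eq]
  push_cast
  norm_num

theorem Crosses.ladderWeight_eq (h : Crosses u v) :
    ladderWeight φ s(u, v) = ENNReal.ofReal (2 * φ u.level + 4) := by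
  change edist (potential φ u) (potential φ v) = _
  rw [potential, potential, h.2.2.1, h.2.2.2.2, edist_signed_false_true (by positivity), h.level_eq]
  congr 1
  ring

end Graph

/-! ### Distances between leaves -/

section Ladder

variable {φ : ℕ → ℕ} {M t r : ℕ} {u v p x : Vertex M} {W : List Bool}

/-- The potential moved away from `0` by `1` at the ancestors of the word `W`, and towards `0` by
`1` at all other vertices. -/
noncomputable def tiltedPotential (φ : ℕ → ℕ) (W : List Bool) (u : Vertex M) : ℝ :=
  signed u.side (φ u.level + if u.toList <:+ W then 3 else 1)

theorem Climbs.edist_tiltedPotential_le (h : Climbs φ u v) :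
    edist (tiltedPotential φ W u) (tiltedPotential φ W v) ≤ ladderWeight φ s(u, v) := by
  have ancestor : v.toList <:+ W → u.toList <:+ W :=
    (h.2.1.trans v.stem_suffix_toList).trans
  rw [h.ladderWeight_eq]
  obtain ⟨hside, -, -, hlabel⟩ := h
  rw [tiltedPotential, tiltedPotential, hside, edist_signed, hlabel, edist_dist, Real.dist_eq,
    ENNReal.ofReal_le_one, abs_le]
  push_cast
  by_cases hu : u.toList <:+ W <;> by_cases hv : v.toList <:+ W
  · rw [if_pos hu, if_pos hv]
    constructor <;> linarith
  · rw [if_pos hu, if_neg hv]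
    constructor <;> linarith
  · exact absurd (ancestor hv) hu
  · rw [if_neg hu, if_neg hv]
    constructor <;> linarith

theorem Crosses.edist_tiltedPotential_le (h : Crosses u v) :
    edist (tiltedPotential φ W u) (tiltedPotential φ W v) ≤ ladderWeight φ s(u, v) := by
  have not_both (hu : u.toList <:+ W) (hv : v.toList <:+ W) : False := by
    have hbit := congrArg Word.bit (Word.eq_of_suffix hu hv h.level_eq)
    exact Bool.false_ne_true (h.2.1.symm.trans (hbit.trans h.2.2.2.1))
  rw [h.ladderWeight_eq, tiltedPotential, tiltedPotential, h.2.2.1, h.2.2.2.2,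
    edist_signed_false_true (by positivity), ← h.level_eq]
  refine ENNReal.ofReal_le_ofReal ?_
  split_ifs with hu hv
  · exact (not_both hu hv).elim
  all_goals linarith

theorem edist_tiltedPotential_le_of_adj (h : (ladderGraph φ M).Adj u v) :
    edist (tiltedPotential φ W u) (tiltedPotential φ W v) ≤ ladderWeight φ s(u, v) := by
  obtain ⟨-, (h | h) | (h | h)⟩ := h
  · exact h.edist_tiltedPotential_le
  · exact h.edist_tiltedPotential_le
  · rw [edist_comm, Sym2.eq_swap]
    exact h.edist_tiltedPotential_le
  · rw [edist_comm, Sym2.eq_swap]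
    exact h.edist_tiltedPotential_le

theorem le_gdist_copies (φ : ℕ → ℕ) (x : Word M) :
    ENNReal.ofReal (2 * φ x.level + 6) ≤
      gdist (ladderGraph φ M) (ladderWeight φ) ⟨x, false⟩ ⟨x, true⟩ := by
  refine le_of_eq_of_le ?_ (edist_le_gdist (f := tiltedPotential φ x.toList)
    (fun _ _ => edist_tiltedPotential_le_of_adj) _ _)
  rw [tiltedPotential, tiltedPotential, edist_signed_false_true (by positivity),
    if_pos List.suffix_rfl]
  congr 1
  ring

theorem IsLevelLabelling.exists_climbs (hφ : IsLevelLabelling φ M t r) (hx : x.level = M)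
    (hside : u.side = x.side) (hu : u.toList <:+ x.toList) (hlt : u.level < M) :
    ∃ v, Climbs φ u v ∧ v.side = x.side ∧ v.toList <:+ x.toList := by
  obtain ⟨m, hmM, hvis, hlabel⟩ := hφ.exists_next u.level hlt
  obtain ⟨y, hyx, rfl⟩ := x.exists_suffix_level_eq (hmM.trans_eq hx.symm)
  have huy : u.toList <:+ y.stem :=
    List.suffix_of_suffix_length_le hu (y.stem_suffix_toList.trans hyx) hvis.1
  exact ⟨⟨y, x.side⟩, ⟨hside, huy, hvis, hlabel⟩, rfl, hyx⟩

-- Descending towards the leaf `x` takes one edge of weight `1` for each unit of the label.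
theorem gdist_add_label_le (hφ : IsLevelLabelling φ M t r) (hx : x.level = M)
    (hside : u.side = x.side) (hu : u.toList <:+ x.toList) :
    gdist (ladderGraph φ M) (ladderWeight φ) u x + φ u.level ≤ r := by
  induction hd : M - u.level using Nat.strong_induction_on generalizing u with
  | _ d ih =>
    obtain hlast | hlt := u.length_stem_le.eq_or_lt
    · obtain rfl : u = x :=
        Vertex.ext_toWord (Word.eq_of_suffix hu List.suffix_rfl (hlast.trans hx.symm)) hside
      rw [gdist_self, zero_add, hx, hφ.last_eq]
    obtain ⟨v, huv, hvside, hv⟩ := hφ.exists_climbs hx hside hu hlt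
    have hcloser : M - v.level < d := hd ▸ Nat.sub_lt_sub_left hlt huv.2.2.1.1
    calc
      _ ≤ (ladderWeight φ s(u, v) + gdist (ladderGraph φ M) (ladderWeight φ) v x) + φ u.level := by
        gcongr
        exact (gdist_triangle u v x).trans (by gcongr; exact gdist_le_of_adj huv.adj)
      _ = gdist (ladderGraph φ M) (ladderWeight φ) v x + φ v.level := by
        rw [huv.ladderWeight_eq, huv.2.2.2, Nat.cast_succ]
        ring
      _ ≤ r := ih _ hcloser hvside hv rfl

theorem gdist_le_of_crosses (hφ : IsLevelLabelling φ M t r) (huv : Crosses u v)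
    (hp : p.level = M) (hx : x.level = M) (hup : u.side = p.side) (hvx : v.side = x.side)
    (hu : u.toList <:+ p.toList) (hv : v.toList <:+ x.toList) :
    gdist (ladderGraph φ M) (ladderWeight φ) p x ≤ ENNReal.ofReal (2 * r + 4) := by
  have ofReal_eq (a : ℕ) : ENNReal.ofReal (2 * a + 4) = 2 * a + 4 := by
    exact_mod_cast ENNReal.ofReal_natCast (2 * a + 4)
  calc gdist (ladderGraph φ M) (ladderWeight φ) p x
      ≤ gdist (ladderGraph φ M) (ladderWeight φ) u p +
          (ladderWeight φ s(u, v) + gdist (ladderGraph φ M) (ladderWeight φ) v x) := by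
        rw [gdist_comm u p]
        refine (gdist_triangle p u x).trans ?_
        gcongr
        refine (gdist_triangle u v x).trans ?_
        gcongr
        exact gdist_le_of_adj huv.adj
    _ = (gdist (ladderGraph φ M) (ladderWeight φ) u p + φ u.level) +
          (gdist (ladderGraph φ M) (ladderWeight φ) v x + φ v.level) + 4 := by
        rw [huv.ladderWeight_eq, ofReal_eq, ← huv.level_eq]
        ring
    _ ≤ r + r + 4 := by
        gcongr
        · exact gdist_add_label_le hφ hp hup hu
        · exact gdist_add_label_le hφ hx hvx hv
    _ = ENNReal.ofReal (2 * r + 4) := by rw [ofReal_eq, two_mul]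

/-- The last `n` binary digits of `i`, least significant first. -/
def bits (n i : ℕ) : List Bool := List.ofFn fun k : Fin n => i.testBit k

theorem length_bits (n i : ℕ) : (bits n i).length = n :=
  List.length_ofFn

theorem bits_succ (n i : ℕ) : bits (n + 1) i = i.testBit 0 :: bits n (i / 2) := by
  simp [bits, List.ofFn_succ, Nat.testBit_succ]

theorem exists_suffix_bits_of_lt {n i j : ℕ} (hi : i < 2 ^ n) (hji : j < i) :
    ∃ s, false :: s <:+ bits n j ∧ true :: s <:+ bits n i := by
  induction n generalizing i j with
  | zero => lia
  | succ n ih =>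
    rw [bits_succ, bits_succ]
    by_cases hhalf : j / 2 < i / 2
    · obtain ⟨s, hj, hi⟩ := ih (by lia) hhalf
      exact ⟨s, hj.trans (List.suffix_cons _ _), hi.trans (List.suffix_cons _ _)⟩
    · have hj0 : j.testBit 0 = false := by rw [Nat.testBit_zero]; exact decide_eq_false (by lia)
      have hi1 : i.testBit 0 = true := by rw [Nat.testBit_zero]; exact decide_eq_true (by lia)
      have heq : j / 2 = i / 2 := by lia
      exact ⟨bits n (i / 2), by rw [hj0, heq], by rw [hi1]⟩

/-- The leaf of the binary tree that spells the binary digits of `i`. -/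
def leaf (M i : ℕ) : Word M := ⟨bits M (i / 2), i.testBit 0, (length_bits _ _).le⟩

theorem level_leaf (M i : ℕ) : (leaf M i).level = M :=
  length_bits _ _

theorem toList_leaf (M i : ℕ) : (leaf M i).toList = bits (M + 1) i :=
  (bits_succ M i).symm

theorem IsLevelLabelling.gdist_leaf_le (hφ : IsLevelLabelling φ M t r) {i j : ℕ}
    (hi : i < 2 ^ (M + 1)) (hji : j < i) :
    gdist (ladderGraph φ M) (ladderWeight φ) ⟨leaf M j, false⟩ ⟨leaf M i, true⟩ ≤
      ENNReal.ofReal (2 * r + 4) := by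
  obtain ⟨s, hj, hi⟩ := exists_suffix_bits_of_lt hi hji
  rw [← toList_leaf] at hj hi
  have hs : s.length ≤ M := by
    simpa only [Word.length_toList, level_leaf, List.length_cons, Nat.add_le_add_iff_right]
      using hj.length_le
  exact gdist_le_of_crosses hφ (u := ⟨⟨s, false, hs⟩, false⟩) (v := ⟨⟨s, true, hs⟩, true⟩)
    ⟨rfl, rfl, rfl, rfl, rfl⟩ (level_leaf M j) (level_leaf M i) rfl rfl hj hi

theorem IsLevelLabelling.isLadder_leaf (hφ : IsLevelLabelling φ M t r) {ε : ℝ}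
    (hε : ε < 1 / ((r : ℝ) + 2)) :
    IsLadder (gdist (ladderGraph φ M) (ladderWeight φ)) ε (2 * r + 4) (2 ^ (M + 1))
      (fun i => ⟨leaf M i, true⟩) (fun i => ⟨leaf M i, false⟩) := by
  refine ⟨fun i j hji => hφ.gdist_leaf_le i.2 hji, fun i => ?_⟩
  refine lt_of_lt_of_le ?_ (le_gdist_copies φ (leaf M i))
  rw [level_leaf, hφ.last_eq, ENNReal.ofReal_lt_ofReal_iff (by positivity)]
  have : ε * (r + 2) < 1 := (lt_div_iff₀ (by positivity)).1 hε
  linarith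

end Ladder

/-! ### The tree decomposition -/

section TreeDecomposition

variable {φ : ℕ → ℕ} {M t r : ℕ} {v : Vertex M} {x : Word M}

namespace Word

/-- The parent function of the decomposition tree. Of two siblings, the right one is attached to
the left one, and the left one is attached to the node above both. -/
def treeParent : Word M → Word M
  | ⟨s, true, h⟩ => ⟨s, false, h⟩
  | ⟨[], false, h⟩ => ⟨[], false, h⟩
  | ⟨b :: s, false, h⟩ => ⟨s, b, s.length.le_succ.trans h⟩

/-- The root of the decomposition tree. -/
def treeRoot (M : ℕ) : Word M := ⟨[], false, M.zero_le⟩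

/-- A rank that strictly increases from a node of the decomposition tree to its children. -/
def treeRank (x : Word M) : ℕ := 2 * x.level + x.bit.toNat

theorem treeRank_treeParent_lt (hx : x ≠ treeRoot M) : x.treeParent.treeRank < x.treeRank := by
  match x, hx with
  | ⟨s, true, _⟩, _ => exact Nat.lt_succ_self _
  | ⟨[], false, _⟩, hx => exact absurd rfl hx
  | ⟨b :: s, false, _⟩, _ =>
    have := b.toNat_lt
    change 2 * s.length + b.toNat < 2 * (s.length + 1) + 0
    lia

end Word

/-- The bag of the word `x`: both copies of `x`, both ends of the crossing edge between `x` and its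
sibling, and all copies of the ancestors of `x` whose level is visible from that of `x`. -/
def bag (φ : ℕ → ℕ) (x : Word M) : Set (Vertex M) :=
  {v | v.toWord = x ∨ (v.stem = x.stem ∧ v.bit = v.side) ∨
    (v.toList <:+ x.stem ∧ Visible φ v.level x.level)}

/-- The bag of `v` nearest to the root. -/
def topBag (v : Vertex M) : Word M := ⟨v.stem, v.bit && !v.side, v.length_stem_le⟩

theorem mem_bag_topBag (v : Vertex M) : v ∈ bag φ (topBag v) := by
  obtain ⟨⟨s, b, h⟩, d⟩ := v
  cases b <;> cases d <;> simp [bag, topBag]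

theorem eq_topBag_of_bit_eq_false (hx : x.bit = false)
    (hv : v.toWord = x ∨ (v.stem = x.stem ∧ v.bit = v.side)) : x = topBag v := by
  obtain rfl | ⟨hstem, hbit⟩ := hv
  · refine Word.ext rfl ?_
    rw [hx, topBag, hx, Bool.false_and]
  · refine Word.ext hstem.symm ?_
    rw [hx, topBag, hbit, Bool.and_not_self]

theorem mem_bag_treeParent_of_bit_eq_true {s : List Bool} {h : s.length ≤ M}
    (hv : v ∈ bag φ ⟨s, true, h⟩) (hx : ⟨s, true, h⟩ ≠ topBag v) : v ∈ bag φ ⟨s, false, h⟩ := by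
  obtain hword | hsibling | hancestor := hv
  · obtain ⟨word, side⟩ := v
    obtain rfl : word = ⟨s, true, h⟩ := hword
    cases side
    · exact absurd rfl hx
    · exact Or.inr (Or.inl ⟨rfl, rfl⟩)
  · exact Or.inr (Or.inl hsibling)
  · exact Or.inr (Or.inr hancestor)

theorem mem_bag_of_suffix_cons {b : Bool} {s : List Bool} {h : s.length ≤ M}
    (hv : v.toList <:+ b :: s) (hvis : Visible φ v.level (s.length + 1)) :
    v ∈ bag φ ⟨s, b, h⟩ := by
  obtain heq | hsuffix := List.suffix_cons_iff.1 hv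
  · exact Or.inl (Word.toList_injective heq)
  · exact Or.inr (Or.inr ⟨hsuffix, hvis.of_le hsuffix.length_le s.length.le_succ⟩)

theorem mem_bag_treeParent (hv : v ∈ bag φ x) (hx : x ≠ topBag v) :
    x ≠ Word.treeRoot M ∧ v ∈ bag φ x.treeParent := by
  match x with
  | ⟨s, true, h⟩ =>
    exact ⟨fun hroot => Bool.false_ne_true (congrArg Word.bit hroot).symm,
      mem_bag_treeParent_of_bit_eq_true hv hx⟩
  | ⟨[], false, h⟩ =>
    obtain ⟨hv, -⟩ := (or_assoc.2 hv).resolve_left fun h => hx (eq_topBag_of_bit_eq_false rfl h)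
    exact absurd (List.suffix_nil.1 hv) (List.cons_ne_nil _ _)
  | ⟨b :: s, false, h⟩ =>
    obtain ⟨hv, hvis⟩ := (or_assoc.2 hv).resolve_left fun h => hx (eq_topBag_of_bit_eq_false rfl h)
    exact ⟨fun hroot => List.cons_ne_nil _ _ (congrArg Word.stem hroot),
      mem_bag_of_suffix_cons hv hvis⟩

theorem Climbs.exists_mem_bag {u v : Vertex M} (h : Climbs φ u v) :
    ∃ x, u ∈ bag φ x ∧ v ∈ bag φ x :=
  ⟨v.toWord, Or.inr (Or.inr ⟨h.2.1, h.2.2.1⟩), Or.inl rfl⟩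

theorem Crosses.exists_mem_bag {u v : Vertex M} (h : Crosses u v) :
    ∃ x, u ∈ bag φ x ∧ v ∈ bag φ x :=
  ⟨u.toWord, Or.inl rfl, Or.inr (Or.inl ⟨h.1.symm, h.2.2.2.1.trans h.2.2.2.2.symm⟩)⟩

theorem isTreeDecompOf_bag (φ : ℕ → ℕ) (M : ℕ) :
    IsTreeDecompOf (ladderGraph φ M) (parentGraph Word.treeParent) (bag φ) := by
  refine ⟨parentGraph_isTree (root := Word.treeRoot M) (rank := Word.treeRank) rfl
    fun _ => Word.treeRank_treeParent_lt, ?_, fun v => ?_⟩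
  · rintro u v ⟨-, (h | h) | (h | h)⟩
    · exact h.exists_mem_bag
    · exact h.exists_mem_bag
    · exact h.exists_mem_bag.imp fun _ => And.symm
    · exact h.exists_mem_bag.imp fun _ => And.symm
  · refine induce_parentGraph_connected (rank := Word.treeRank) (mem_bag_topBag v) fun x hv hx => ?_
    obtain ⟨hroot, hparent⟩ := mem_bag_treeParent hv hx
    exact ⟨hparent, Word.treeRank_treeParent_lt hroot⟩

theorem ncard_visible_ancestors_le (hφ : IsLevelLabelling φ M t r) (x : Word M) :
    {v : Vertex M | v.toList <:+ x.stem ∧ Visible φ v.level x.level}.ncard ≤ 2 * t := by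
  let levels := {k | Visible φ k x.level}
  calc
    _ ≤ (levels ×ˢ (Set.univ : Set Bool)).ncard := by
      refine Set.ncard_le_ncard_of_injOn (fun v => (v.level, v.side))
        (fun v hv => ⟨hv.2, Set.mem_univ _⟩) ?_
        ((finite_setOf_visible φ x.level).prod Set.finite_univ)
      intro u hu v hv huv
      exact Vertex.ext_toWord (Word.eq_of_suffix hu.1 hv.1 (congrArg Prod.fst huv))
        (congrArg Prod.snd huv)
    _ = levels.ncard * 2 := by
      rw [Set.ncard_prod, Set.ncard_univ, Nat.card_eq_fintype_card, Fintype.card_bool]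
    _ ≤ 2 * t := by
      rw [mul_comm]
      exact Nat.mul_le_mul_left 2 (hφ.ncard_visible_le x.level x.length_stem_le)

theorem bag_subset (φ : ℕ → ℕ) (x : Word M) :
    bag φ x ⊆ {⟨x, false⟩, ⟨x, true⟩, ⟨⟨x.stem, !x.bit, x.length_stem_le⟩, !x.bit⟩} ∪
      {v | v.toList <:+ x.stem ∧ Visible φ v.level x.level} := by
  rintro ⟨word, side⟩ (rfl | ⟨hstem, hbit⟩ | hancestor)
  · cases side
    · exact Or.inl (Or.inl rfl)
    · exact Or.inl (Or.inr (Or.inl rfl))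
  · obtain rfl : word.bit = side := hbit
    by_cases hx : word.bit = x.bit
    · obtain rfl : word = x := Word.ext hstem hx
      cases hside : word.bit
      · exact Or.inl (Or.inl rfl)
      · exact Or.inl (Or.inr (Or.inl rfl))
    · have hsibling : word.bit = !x.bit := Bool.eq_not_of_ne hx
      exact Or.inl (Or.inr (Or.inr (Vertex.ext_toWord (Word.ext hstem hsibling) hsibling)))
  · exact Or.inr hancestor

theorem ncard_bag_le (hφ : IsLevelLabelling φ M t r) (x : Word M) :
    (bag φ x).ncard ≤ 2 * t + 3 := by
  have hnear : ({⟨x, false⟩, ⟨x, true⟩, ⟨⟨x.stem, !x.bit, x.length_stem_le⟩, !x.bit⟩} :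
      Set (Vertex M)).ncard ≤ 3 := by
    refine (Set.ncard_insert_le _ _).trans (Nat.succ_le_succ ?_)
    refine (Set.ncard_insert_le _ _).trans ?_
    rw [Set.ncard_singleton]
  have hfar := ncard_visible_ancestors_le hφ x
  have hunion := (Set.ncard_le_ncard (bag_subset φ x) (Set.toFinite _)).trans
    (Set.ncard_union_le _ _)
  lia

theorem IsLevelLabelling.treewidthAtMost (hφ : IsLevelLabelling φ M t r) :
    TreewidthAtMost (ladderGraph φ M) (2 * t + 2) :=
  ⟨_, _, _, isTreeDecompOf_bag φ M, ncard_bag_le hφ⟩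

end TreeDecomposition

theorem stmt_1 (t r : ℕ) (ht : 1 ≤ t) (hr : 1 ≤ r) (ε : ℝ)
    (hε0 : 0 < ε) (hε : ε < 1 / ((r : ℝ) + 2)) :
    ∃ (V : Type) (_ : Fintype V) (G : SimpleGraph V) (w : Sym2 V → ℝ≥0∞),
      (∀ e, w e ≠ ⊤) ∧
      TreewidthAtMost G (2 * t + 2) ∧
      ∃ ρ : ℝ, 0 < ρ ∧
        ∃ x p : Fin (2 ^ ((t + r).choose t)) → V,
          IsLadder (gdist G w) ε ρ (2 ^ ((t + r).choose t)) x p := by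
  obtain ⟨M, φ, hM, hφ⟩ := exists_isLevelLabelling t r
  rw [← hM]
  exact ⟨Vertex M, Fintype.ofFinite _, ladderGraph φ M, ladderWeight φ, ladderWeight_ne_top φ,
    hφ.treewidthAtMost, 2 * r + 4, by positivity, _, _, hφ.isLadder_leaf hε⟩

end ScatterDim
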